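/- (Lemma 2 of the Appendix.) In the channel model with a history-dependent deterministic encoder ψ, define the belief process (Π_0, H_0) := (uniform on 𝒲, w ↦ point mass at u₁) and (Π_t, H_t) := F(Π_{t-1}, H_{t-1}, φ^{Z_{1:t-1}}_t, Y_t), and define the value functions V_t by backward dynamic programming: V_{n+1}(σ, u, w) := Σ_{(π,η)} σ(π,η)·(1 − max_{w̃} π(w̃)) and V_t(σ, u, w) := min over φ ∈ (𝒲×𝒰→𝒳) of Σ_{y,z} Q^f(y|φ(w,u)) Q^b(z|y) V_{t+1}(G¹(σ,φ,z,u,w), G²(u,φ,z,w), w). Then for every 1 ≤ t ≤ n, every w ∈ 𝒲, and every z_{1:t-1} with P(W = w, Z_{1:t-1} = z_{1:t-1}) > 0, letting σ_t be the conditional law of (Π_{t-1}, H_{t-1}) given (W = w, Z_{1:t-1} = z_{1:t-1}), u_t the memory determined by (w, z_{1:t-1}) via G², σ_{t+1}(z_t) the conditional law of (Π_t, H_t) given (W = w, Z_{1:t} = (z_{1:t-1},z_t)), and u_{t+1}(z_t) := G²(u_t, φ^{z_{1:t-1}}_t, z_t, w), one has V_t(σ_t, u_t, w) ≤ Σ_{z_t}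 P(Z_t = z_t | W = w, Z_{1:t-1} = z_{1:t-1}) · V_{t+1}(σ_{t+1}(z_t), u_{t+1}(z_t), w). -/

import Mathlib

open scoped ENNReal Classical
open Finset

namespace NoisyFeedback

variable {W X Y Z U : Type*}

/-- Memory evolution: `mem G2 u1 φ w t zs` is the sender's memory after having
observed the feedback symbols `zs = z_{1:t}`. -/
def mem (G2 : U → (W × U → X) → Z → W → U) (u1 : U) (φ : ℕ → W × U → X) (w : W) :
    (t : ℕ) → (Fin t → Z) → U
  | 0, _ => u1
  | t + 1, zs => G2 (mem G2 u1 φ w t (Fin.init zs)) (φ t) (zs (Fin.last t)) w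

variable [Fintype W] [Fintype X] [Fintype Y] [Fintype Z] [Fintype U]

/-- Joint pmf `P(W = w, Y_{1:t} = ys, Z_{1:t} = zs)` of the channel model with
Markov encoders `φ`. -/
noncomputable def jointP (Qf : X → PMF Y) (Qb : Y → PMF Z)
    (G2 : U → (W × U → X) → Z → W → U) (u1 : U) (φ : ℕ → W × U → X)
    (t : ℕ) (w : W) (ys : Fin t → Y) (zs : Fin t → Z) : ℝ≥0∞ :=
  (Fintype.card W : ℝ≥0∞)⁻¹ *
    ∏ i : Fin t,
      Qf (φ i (w, mem G2 u1 φ w i (fun j => zs (Fin.castLE i.2.le j)))) (ys i) *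
        Qb (ys i) (zs i)

/-- `P(Y_{1:t} = ys)`. -/
noncomputable def probY (Qf : X → PMF Y) (Qb : Y → PMF Z)
    (G2 : U → (W × U → X) → Z → W → U) (u1 : U) (φ : ℕ → W × U → X)
    (t : ℕ) (ys : Fin t → Y) : ℝ≥0∞ :=
  ∑ w : W, ∑ zs : Fin t → Z, jointP Qf Qb G2 u1 φ t w ys zs

/-- `P(W = w, Y_{1:t} = ys)`. -/
noncomputable def probWY (Qf : X → PMF Y) (Qb : Y → PMF Z)
    (G2 : U → (W × U → X) → Z → W → U) (u1 : U) (φ : ℕ → W × U → X)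
    (t : ℕ) (ys : Fin t → Y) (w : W) : ℝ≥0∞ :=
  ∑ zs : Fin t → Z, jointP Qf Qb G2 u1 φ t w ys zs

/-- `P(W = w, Z_{1:t} = zs)`. -/
noncomputable def probWZ (Qf : X → PMF Y) (Qb : Y → PMF Z)
    (G2 : U → (W × U → X) → Z → W → U) (u1 : U) (φ : ℕ → W × U → X)
    (t : ℕ) (w : W) (zs : Fin t → Z) : ℝ≥0∞ :=
  ∑ ys : Fin t → Y, jointP Qf Qb G2 u1 φ t w ys zs

/-- `P(W = w, U_{t+1} = u, Y_{1:t} = ys)` (memory after `t` feedback symbols). -/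
noncomputable def probWUY (Qf : X → PMF Y) (Qb : Y → PMF Z)
    (G2 : U → (W × U → X) → Z → W → U) (u1 : U) (φ : ℕ → W × U → X)
    (t : ℕ) (ys : Fin t → Y) (w : W) (u : U) : ℝ≥0∞ :=
  ∑ zs : Fin t → Z,
    if mem G2 u1 φ w t zs = u then jointP Qf Qb G2 u1 φ t w ys zs else 0


/-- Belief states of the receiver: a belief `π` on the message together with, for each
message `w`, a belief `η w` on the sender's memory. -/
@[reducible] def Belief (W U : Type*) : Type _ := (W → ℝ≥0∞) × (W → U → ℝ≥0∞)

/-- Update map `F¹` of the receiver's belief on the message. -/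
noncomputable def F1 (Qf : X → PMF Y) (p : Belief W U) (φ : W × U → X) (y : Y) :
    W → ℝ≥0∞ := fun w =>
  p.1 w * (∑ u : U, p.2 w u * Qf (φ (w, u)) y) /
    ∑ w' : W, p.1 w' * ∑ u : U, p.2 w' u * Qf (φ (w', u)) y

/-- Update map `F²` of the receiver's conditional belief on the sender's memory. -/
noncomputable def F2 (Qf : X → PMF Y) (Qb : Y → PMF Z)
    (G2 : U → (W × U → X) → Z → W → U) (p : Belief W U) (φ : W × U → X) (y : Y) :
    W → U → ℝ≥0∞ := fun w u' =>
  (∑ u : U, ∑ z : Z,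
      p.2 w u * Qf (φ (w, u)) y * Qb y z * (if u' = G2 u φ z w then 1 else 0)) /
    ∑ u : U, p.2 w u * Qf (φ (w, u)) y

/-- Combined belief update `F = (F¹, F²)`. -/
noncomputable def Fb (Qf : X → PMF Y) (Qb : Y → PMF Z)
    (G2 : U → (W × U → X) → Z → W → U) (p : Belief W U) (φ : W × U → X) (y : Y) :
    Belief W U :=
  (F1 Qf p φ y, F2 Qf Qb G2 p φ y)

/-- Sender belief update `G¹`: update of the sender's belief `σ` over receiver belief
states upon transmitting with encoding function `φ` (with memory `u`, message `w`)
and receiving feedback `z`. -/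
noncomputable def G1 (Qf : X → PMF Y) (Qb : Y → PMF Z)
    (G2 : U → (W × U → X) → Z → W → U) (σ : Belief W U → ℝ≥0∞)
    (φ : W × U → X) (z : Z) (u : U) (w : W) : Belief W U → ℝ≥0∞ := fun b =>
  (∑' p : Belief W U, σ p * ∑ y : Y,
      Qf (φ (w, u)) y * Qb y z * (if b = Fb Qf Qb G2 p φ y then 1 else 0)) /
    ∑ y : Y, Qf (φ (w, u)) y * Qb y z

/-- Initial belief state: uniform on the messages, point mass at `u1` on the memory. -/
noncomputable def b0 [Fintype W] (u1 : U) : Belief W U :=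
  (fun _ => (Fintype.card W : ℝ≥0∞)⁻¹, fun _ u => if u = u1 then 1 else 0)

/-- Initial sender belief: point mass at the initial belief state `b0`. -/
noncomputable def σ0 [Fintype W] (u1 : U) : Belief W U → ℝ≥0∞ := fun b =>
  if b = b0 u1 then 1 else 0

/-- The receiver belief process `(Π_t, H_t)` as a function of the channel outputs,
under the Markov encoders `φ`. -/
noncomputable def beliefs (Qf : X → PMF Y) (Qb : Y → PMF Z)
    (G2 : U → (W × U → X) → Z → W → U) (u1 : U) (φ : ℕ → W × U → X) :
    (t : ℕ) → (Fin t → Y) → Belief W U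
  | 0, _ => b0 u1
  | t + 1, ys =>
      Fb Qf Qb G2 (beliefs Qf Qb G2 u1 φ t (Fin.init ys)) (φ t) (ys (Fin.last t))

/-- Dynamic-programming value functions, indexed by the number `k` of remaining
transmissions: `Vk k = V_{n+1-k}` of the paper, so `Vk 0 = V_{n+1}` is the terminal
cost `Σ_{(π,η)} σ(π,η) (1 - max_w̃ π(w̃))`, and each step minimizes over the (finitely
many) encoding functions `φ : 𝒲 × 𝒰 → 𝒳`. -/
noncomputable def Vk (Qf : X → PMF Y) (Qb : Y → PMF Z)
    (G2 : U → (W × U → X) → Z → W → U) :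
    ℕ → (Belief W U → ℝ≥0∞) → U → W → ℝ≥0∞
  | 0, σ, _, _ => ∑' p : Belief W U, σ p * (1 - univ.sup fun w' : W => p.1 w')
  | k + 1, σ, u, w =>
      ⨅ φ : W × U → X,
        ∑ y : Y, ∑ z : Z,
          Qf (φ (w, u)) y * Qb y z *
            Vk Qf Qb G2 k (G1 Qf Qb G2 σ φ z u w) (G2 u φ z w) w

/-- Memory evolution under a history-dependent encoder `ψ`:
`U_{t+1} = G²(U_t, φ^{z_{1:t-1}}_t, Z_t, W)` where `φ^{z_{1:t-1}}_t (w', u') = ψ_t (w', z_{1:t-1})`. -/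
def memψ (G2 : U → (W × U → X) → Z → W → U) (u1 : U)
    (ψ : (t : ℕ) → W → (Fin t → Z) → X) (w : W) :
    (t : ℕ) → (Fin t → Z) → U
  | 0, _ => u1
  | t + 1, zs =>
      G2 (memψ G2 u1 ψ w t (Fin.init zs))
        (fun p : W × U => ψ t p.1 (Fin.init zs)) (zs (Fin.last t)) w

/-- Joint pmf `P(W = w, Y_{1:t} = ys, Z_{1:t} = zs)` of the channel model with a
history-dependent deterministic encoder `ψ` (so `X_t = ψ_t (W, Z_{1:t-1})`). -/
noncomputable def jointPψ (Qf : X → PMF Y) (Qb : Y → PMF Z)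
    (ψ : (t : ℕ) → W → (Fin t → Z) → X)
    (t : ℕ) (w : W) (ys : Fin t → Y) (zs : Fin t → Z) : ℝ≥0∞ :=
  (Fintype.card W : ℝ≥0∞)⁻¹ *
    ∏ i : Fin t,
      Qf (ψ i w (fun j => zs (Fin.castLE i.2.le j))) (ys i) * Qb (ys i) (zs i)

/-- `P(W = w, Z_{1:t} = zs)` under the encoder `ψ`. -/
noncomputable def probWZψ (Qf : X → PMF Y) (Qb : Y → PMF Z)
    (ψ : (t : ℕ) → W → (Fin t → Z) → X)
    (t : ℕ) (w : W) (zs : Fin t → Z) : ℝ≥0∞ :=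
  ∑ ys : Fin t → Y, jointPψ Qf Qb ψ t w ys zs

/-- `P(W = w, Y_{1:t} = ys)` under the encoder `ψ`. -/
noncomputable def probWYψ (Qf : X → PMF Y) (Qb : Y → PMF Z)
    (ψ : (t : ℕ) → W → (Fin t → Z) → X)
    (t : ℕ) (ys : Fin t → Y) (w : W) : ℝ≥0∞ :=
  ∑ zs : Fin t → Z, jointPψ Qf Qb ψ t w ys zs

/-- The receiver belief process `(Π_t, H_t)` under a history-dependent encoder `ψ`:
`(Π_0, H_0) = (uniform, point mass at u₁)` and
`(Π_t, H_t) = F(Π_{t-1}, H_{t-1}, φ^{z_{1:t-1}}_t, y_t)`. -/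
noncomputable def beliefsψ (Qf : X → PMF Y) (Qb : Y → PMF Z)
    (G2 : U → (W × U → X) → Z → W → U) (u1 : U)
    (ψ : (t : ℕ) → W → (Fin t → Z) → X) :
    (t : ℕ) → (Fin t → Y) → (Fin t → Z) → Belief W U
  | 0, _, _ => b0 u1
  | t + 1, ys, zs =>
      Fb Qf Qb G2 (beliefsψ Qf Qb G2 u1 ψ t (Fin.init ys) (Fin.init zs))
        (fun p : W × U => ψ t p.1 (Fin.init zs)) (ys (Fin.last t))

/-! The encoding function `φ^{z_{1:t-1}}_t` induced by `ψ` is one competitor in the minimum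
defining `V_t`, and it sends the actual channel input `ψ_t(w, z_{1:t-1})`. For this competitor
Bayes' rule identifies the updated sender belief `G¹` with the conditional law of the next
receiver belief, so its cost is exactly the conditional expectation of `V_{t+1}`. -/

section FiniteSums

variable {α : Type*} [Fintype α]

theorem sum_pi_fin_succ_eq_sum_snoc {M : Type*} [AddCommMonoid M] {n : ℕ}
    (f : (Fin (n + 1) → α) → M) :
    ∑ v, f v = ∑ v : Fin n → α, ∑ a, f (Fin.snoc v a) := by
  rw [← (Fin.snocEquiv fun _ => α).sum_comp, Fintype.sum_prod_type, sum_comm]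
  rfl

theorem tsum_sum_ite_eq_mul {β R : Type*} [DecidableEq β] [NonAssocSemiring R]
    [TopologicalSpace R] (g : α → β) (m : α → R) (f : β → R) :
    ∑' b, (∑ a, if g a = b then m a else 0) * f b = ∑ a, m a * f (g a) := by
  have hsupp : ∀ b ∉ univ.image g, (∑ a, if g a = b then m a else 0) * f b = 0 := by
    intro b hb
    have hne : ∀ a, g a ≠ b := by simpa using hb
    simp [hne]
  rw [tsum_eq_sum hsupp]
  simp only [sum_mul, ite_mul, zero_mul]
  rw [sum_comm]
  exact sum_congr rfl fun a _ => by simp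

theorem bind_apply_eq_sum {β : Type*} (p : PMF α) (f : α → PMF β) (b : β) :
    p.bind f b = ∑ a, p a * f a b := by
  rw [PMF.bind_apply, tsum_fintype]

end FiniteSums

theorem snoc_comp_castLE {α : Type*} {s i : ℕ} (zs : Fin s → α) (z : α) (hi : i ≤ s) :
    (Fin.snoc zs z : Fin (s + 1) → α) ∘ Fin.castLE (Nat.le_succ_of_le hi) =
      zs ∘ Fin.castLE hi :=
  funext fun j => Fin.snoc_castSucc (α := fun _ => α) z zs (Fin.castLE hi j)

section ChannelModel

variable (Qf : X → PMF Y) (Qb : Y → PMF Z) (G2 : U → (W × U → X) → Z → W → U) (u1 : U)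
  (ψ : (t : ℕ) → W → (Fin t → Z) → X) {s : ℕ} (w : W) (zs : Fin s → Z) (z : Z)

omit [Fintype X]

/-- The encoding function `φ^{z_{1:t-1}}_t` induced by `ψ` after the feedback `zs = z_{1:t-1}`;
it does not depend on the memory argument. -/
def encodingMap (U : Type*) (ψ : (t : ℕ) → W → (Fin t → Z) → X) (zs : Fin s → Z) : W × U → X :=
  fun p => ψ s p.1 zs

omit [Fintype W] [Fintype Z] [Fintype U] in
theorem encodingMap_apply (p : W × U) : encodingMap U ψ zs p = ψ s p.1 zs := rfl

/-- The sender's belief `σ_t`: the conditional law of the receiver's belief state given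
`W = w, Z_{1:t-1} = zs`, as a pmf on belief states when this event has positive probability. -/
noncomputable def senderBelief : Belief W U → ℝ≥0∞ := fun b =>
  (∑ ys : Fin s → Y,
    if beliefsψ Qf Qb G2 u1 ψ s ys zs = b then jointPψ Qf Qb ψ s w ys zs else 0) /
      probWZψ Qf Qb ψ s w zs

omit [Fintype W] [Fintype Z] [Fintype U] in
theorem memψ_snoc :
    memψ G2 u1 ψ w (s + 1) (Fin.snoc zs z) =
      G2 (memψ G2 u1 ψ w s zs) (encodingMap U ψ zs) z w := by
  rw [memψ, Fin.init_snoc, Fin.snoc_last]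
  rfl

omit [Fintype Y] in
theorem beliefsψ_snoc (ys : Fin s → Y) (y : Y) :
    beliefsψ Qf Qb G2 u1 ψ (s + 1) (Fin.snoc ys y) (Fin.snoc zs z) =
      Fb Qf Qb G2 (beliefsψ Qf Qb G2 u1 ψ s ys zs) (encodingMap U ψ zs) y := by
  simp only [beliefsψ, Fin.init_snoc, Fin.snoc_last]
  rfl

omit [Fintype Y] [Fintype Z] in
theorem jointPψ_snoc (ys : Fin s → Y) (y : Y) :
    jointPψ Qf Qb ψ (s + 1) w (Fin.snoc ys y) (Fin.snoc zs z) =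
      jointPψ Qf Qb ψ s w ys zs * (Qf (ψ s w zs) y * Qb y z) := by
  unfold jointPψ
  rw [Fin.prod_univ_castSucc, mul_assoc]
  simp only [Fin.snoc_castSucc, Fin.snoc_last]
  congr 2
  · exact prod_congr rfl fun i _ =>
      congrArg (fun v => Qf (ψ i w v) (ys i) * Qb (ys i) (zs i)) (snoc_comp_castLE zs z i.2.le)
  · exact congrArg (fun v => Qf (ψ s w v) y * Qb y z) (snoc_comp_castLE zs z le_rfl)

omit [Fintype Z] in
theorem probWZψ_snoc :
    probWZψ Qf Qb ψ (s + 1) w (Fin.snoc zs z) =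
      probWZψ Qf Qb ψ s w zs * (Qf (ψ s w zs)).bind Qb z := by
  simp only [probWZψ, sum_pi_fin_succ_eq_sum_snoc, jointPψ_snoc, bind_apply_eq_sum, sum_mul_sum]

omit [Fintype Z] in
theorem probWZψ_ne_top : probWZψ Qf Qb ψ s w zs ≠ ∞ := by
  have : Nonempty W := ⟨w⟩
  refine ENNReal.sum_ne_top.2 fun ys _ => ENNReal.mul_ne_top (by simp) ?_
  exact ENNReal.prod_ne_top fun i _ =>
    ENNReal.mul_ne_top (PMF.apply_ne_top _ _) (PMF.apply_ne_top _ _)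

omit [Fintype Z] in
variable {w zs} in
theorem probWZψ_snoc_div_probWZψ (h : probWZψ Qf Qb ψ s w zs ≠ 0) :
    probWZψ Qf Qb ψ (s + 1) w (Fin.snoc zs z) / probWZψ Qf Qb ψ s w zs =
      (Qf (ψ s w zs)).bind Qb z := by
  rw [probWZψ_snoc, mul_comm, ENNReal.mul_div_cancel_right h (probWZψ_ne_top Qf Qb ψ w zs)]

theorem tsum_senderBelief_mul (f : Belief W U → ℝ≥0∞) :
    ∑' p, senderBelief Qf Qb G2 u1 ψ w zs p * f p =
      (∑ ys : Fin s → Y, jointPψ Qf Qb ψ s w ys zs * f (beliefsψ Qf Qb G2 u1 ψ s ys zs)) /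
        probWZψ Qf Qb ψ s w zs := by
  simp only [senderBelief, div_eq_mul_inv, mul_right_comm _ (probWZψ Qf Qb ψ s w zs)⁻¹]
  rw [ENNReal.tsum_mul_right, tsum_sum_ite_eq_mul]

variable {w zs} in
theorem G1_senderBelief (h : probWZψ Qf Qb ψ s w zs ≠ 0) (u : U) :
    G1 Qf Qb G2 (senderBelief Qf Qb G2 u1 ψ w zs) (encodingMap U ψ zs) z u w =
      senderBelief Qf Qb G2 u1 ψ w (Fin.snoc zs z) := by
  funext b
  have hnum : ∑ ys : Fin (s + 1) → Y,
      (if beliefsψ Qf Qb G2 u1 ψ (s + 1) ys (Fin.snoc zs z) = b then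
        jointPψ Qf Qb ψ (s + 1) w ys (Fin.snoc zs z) else 0) =
      ∑ ys : Fin s → Y, jointPψ Qf Qb ψ s w ys zs * ∑ y, Qf (ψ s w zs) y * Qb y z *
        if b = Fb Qf Qb G2 (beliefsψ Qf Qb G2 u1 ψ s ys zs) (encodingMap U ψ zs) y
        then 1 else 0 := by
    simp only [sum_pi_fin_succ_eq_sum_snoc, beliefsψ_snoc, jointPψ_snoc, mul_sum, mul_ite,
      mul_one, mul_zero, eq_comm (a := b)]
  simp only [G1, tsum_senderBelief_mul, encodingMap_apply]
  rw [senderBelief, hnum, probWZψ_snoc, bind_apply_eq_sum, div_eq_mul_inv, div_eq_mul_inv,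
    div_eq_mul_inv, ENNReal.mul_inv (.inl h) (.inl (probWZψ_ne_top Qf Qb ψ w zs)), mul_assoc]

theorem Vk_succ_le (k : ℕ) (σ : Belief W U → ℝ≥0∞) (u : U) (φ : W × U → X) :
    Vk Qf Qb G2 (k + 1) σ u w ≤
      ∑ z, (Qf (φ (w, u))).bind Qb z *
        Vk Qf Qb G2 k (G1 Qf Qb G2 σ φ z u w) (G2 u φ z w) w := by
  simp only [Vk, bind_apply_eq_sum, sum_mul]
  rw [sum_comm]
  exact iInf_le _ φ

variable {w zs} in
theorem value_function_submartingale_general (k : ℕ) (h : probWZψ Qf Qb ψ s w zs ≠ 0) :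
    Vk Qf Qb G2 (k + 1) (senderBelief Qf Qb G2 u1 ψ w zs) (memψ G2 u1 ψ w s zs) w ≤
      ∑ z, (probWZψ Qf Qb ψ (s + 1) w (Fin.snoc zs z) / probWZψ Qf Qb ψ s w zs) *
        Vk Qf Qb G2 k (senderBelief Qf Qb G2 u1 ψ w (Fin.snoc zs z))
          (memψ G2 u1 ψ w (s + 1) (Fin.snoc zs z)) w := by
  simp only [probWZψ_snoc_div_probWZψ Qf Qb ψ _ h, memψ_snoc,
    ← G1_senderBelief Qf Qb G2 u1 ψ _ h (memψ G2 u1 ψ w s zs)]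
  exact Vk_succ_le Qf Qb G2 w k _ _ (encodingMap U ψ zs)

end ChannelModel

/-- **Lemma 2 of the Appendix** (Statement 10).  Along any positive-probability feedback
history `z_{1:t-1}` (here of length `s`, with `t = s + 1 ≤ n`), the value function at
the sender's current belief state lower-bounds the conditional expectation (over the
next feedback symbol `Z_t`, generated by the encoder `ψ`) of the next value function:
`V_t(σ_t, u_t, w) ≤ Σ_{z_t} P(Z_t = z_t | W = w, Z_{1:t-1}) V_{t+1}(σ_{t+1}(z_t), u_{t+1}(z_t), w)`,
where `V_t = Vk (n - s)` and `σ_t`, `σ_{t+1}(z_t)` are the conditional laws of the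
receiver's belief state given the sender's information. -/
theorem value_function_submartingale
    [Nonempty W] [Nonempty X] [Nonempty Y] [Nonempty Z] [Nonempty U]
    (Qf : X → PMF Y) (Qb : Y → PMF Z)
    (G2 : U → (W × U → X) → Z → W → U) (u1 : U)
    (ψ : (t : ℕ) → W → (Fin t → Z) → X) (n : ℕ)
    (s : ℕ) (hs : s < n) (w : W) (zs : Fin s → Z)
    (hpos : 0 < probWZψ Qf Qb ψ s w zs) :
    Vk Qf Qb G2 (n - s)
        (fun b =>
          (∑ ys : Fin s → Y,
            if beliefsψ Qf Qb G2 u1 ψ s ys zs = b then jointPψ Qf Qb ψ s w ys zs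
            else 0) / probWZψ Qf Qb ψ s w zs)
        (memψ G2 u1 ψ w s zs) w ≤
      ∑ z : Z,
        (probWZψ Qf Qb ψ (s + 1) w (Fin.snoc zs z) / probWZψ Qf Qb ψ s w zs) *
          Vk Qf Qb G2 (n - s - 1)
            (fun b =>
              (∑ ys : Fin (s + 1) → Y,
                if beliefsψ Qf Qb G2 u1 ψ (s + 1) ys (Fin.snoc zs z) = b then
                  jointPψ Qf Qb ψ (s + 1) w ys (Fin.snoc zs z)
                else 0) / probWZψ Qf Qb ψ (s + 1) w (Fin.snoc zs z))
            (memψ G2 u1 ψ w (s + 1) (Fin.snoc zs z)) w := by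
  obtain ⟨k, hk⟩ : ∃ k, n - s = k + 1 := ⟨n - s - 1, by omega⟩
  rw [hk, Nat.add_sub_cancel]
  exact value_function_submartingale_general Qf Qb G2 u1 ψ k hpos.ne'

end NoisyFeedback
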